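/- Let n ≥ 3, let φ : H_n → H_n be an injective group homomorphism, and let i ≠ j in {2,…,n}. If O is an infinite orbit of φ(g_i), then all points of O moved by φ(g_j) lie in a single orbit of φ(g_j); that is, there is one orbit O' of φ(g_j) with O ∩ supp(φ(g_j)) ⊆ O'. -/

import Mathlib

/-! ## Houghton's groups: basic setup -/

/-- The underlying set of Houghton's group: `n` rays of discrete points;
`(i, p)` is the point at position `p` on the ray `R_i`. -/
abbrev XH (n : ℕ) : Type := Fin n × ℕ

/-- `g` acts, outside a finite set, as the translation by `m i` on the ray `R_i`. -/
def HasTranslationVector {n : ℕ} (g : Equiv.Perm (XH n)) (m : Fin n → ℤ) : Prop :=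
  ∃ K : Finset (XH n), ∀ x : XH n, x ∉ K →
    (g x).1 = x.1 ∧ ((g x).2 : ℤ) = (x.2 : ℤ) + m x.1

/-- An eventual translation of `X_n`. -/
def IsEventualTranslation {n : ℕ} (g : Equiv.Perm (XH n)) : Prop :=
  ∃ m : Fin n → ℤ, HasTranslationVector g m

/-- Houghton's group `H_n`: the group of all eventual translations of `X_n`. -/
def Houghton (n : ℕ) : Subgroup (Equiv.Perm (XH n)) where
  carrier := {g | IsEventualTranslation g}
  one_mem' := ⟨0, ∅, fun x _ => by simp⟩
  mul_mem' := by
    rintro a b ⟨ma, Ka, hKa⟩ ⟨mb, Kb, hKb⟩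
    classical
    refine ⟨ma + mb, Kb ∪ Kb.image b ∪ Ka.image b.symm, fun x hx => ?_⟩
    simp only [Finset.mem_union, not_or] at hx
    have hxb : x ∉ Kb := hx.1.1
    have hbx : b x ∉ Ka := by
      intro hc
      exact hx.2 (Finset.mem_image.mpr ⟨b x, hc, b.symm_apply_apply x⟩)
    obtain ⟨hb1, hb2⟩ := hKb x hxb
    obtain ⟨ha1, ha2⟩ := hKa (b x) hbx
    refine ⟨?_, ?_⟩
    · show (a (b x)).1 = x.1
      rw [ha1, hb1]
    · show ((a (b x)).2 : ℤ) = (x.2 : ℤ) + (ma + mb) x.1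
      rw [ha2, hb1, hb2, Pi.add_apply]
      ring
  inv_mem' := by
    rintro a ⟨m, K, hK⟩
    classical
    refine ⟨-m, K.image a, fun x hx => ?_⟩
    have hy : a⁻¹ x ∉ K := by
      intro hc
      exact hx (Finset.mem_image.mpr ⟨a⁻¹ x, hc, a.apply_symm_apply x⟩)
    obtain ⟨e1, e2⟩ := hK _ hy
    rw [show a (a⁻¹ x) = x from a.apply_symm_apply x] at e1 e2
    refine ⟨e1.symm, ?_⟩
    rw [← e1] at e2
    rw [Pi.neg_apply]
    omega

/-- The subgroup of finitely supported permutations of `X_n`. -/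
def FSymSub (n : ℕ) : Subgroup (Equiv.Perm (XH n)) where
  carrier := {g | {x | g x ≠ x}.Finite}
  one_mem' := by simp
  mul_mem' := by
    intro a b ha hb
    apply Set.Finite.subset (ha.union hb)
    intro x hx
    by_cases h : b x = x
    · left
      show a x ≠ x
      simpa [Equiv.Perm.mul_apply, h] using hx
    · right; exact h
  inv_mem' := by
    intro a ha
    apply Set.Finite.subset ha
    intro x hx
    show a x ≠ x
    intro hc
    apply hx
    show a⁻¹ x = x
    conv_lhs => rw [← hc]
    exact a.symm_apply_apply x

/-- The subgroup of finitely supported even permutations of `X_n`: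
products of an even number of transpositions. -/
def FAltSub (n : ℕ) : Subgroup (Equiv.Perm (XH n)) where
  carrier := {g | ∃ l : List (Equiv.Perm (XH n)),
    (∀ τ ∈ l, τ.IsSwap) ∧ Even l.length ∧ l.prod = g}
  one_mem' := ⟨[], by simp, by simp, by simp⟩
  mul_mem' := by
    rintro a b ⟨la, hla, hea, rfl⟩ ⟨lb, hlb, heb, rfl⟩
    refine ⟨la ++ lb, ?_, ?_, List.prod_append⟩
    · intro τ hτ
      rcases List.mem_append.mp hτ with h | h
      exacts [hla τ h, hlb τ h]
    · simpa using hea.add heb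
  inv_mem' := by
    rintro a ⟨l, hl, he, rfl⟩
    refine ⟨(l.map fun x => x⁻¹).reverse, ?_, by simpa using he,
      (List.prod_inv_reverse l).symm⟩
    intro τ hτ
    rw [List.mem_reverse, List.mem_map] at hτ
    obtain ⟨σ, hσ, rfl⟩ := hτ
    obtain ⟨x, y, hxy, rfl⟩ := hl σ hσ
    exact ⟨x, y, hxy, by rw [Equiv.swap_inv]⟩

/-- `FSym_n` and `FAlt_n` viewed as subgroups of `H_n`. -/
def FSymIn (n : ℕ) : Subgroup (Houghton n) := (FSymSub n).comap (Houghton n).subtype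

def FAltIn (n : ℕ) : Subgroup (Houghton n) := (FAltSub n).comap (Houghton n).subtype

/-- The index of the first ray `R_1`. -/
def ray0 (n : ℕ) (hn : 0 < n) : Fin n := ⟨0, hn⟩

/-- The underlying function of the generator `g_i`. -/
def gFun (n : ℕ) (hn : 0 < n) (i : Fin n) : XH n → XH n := fun x =>
  if x.1 = ray0 n hn then (if x.2 = 0 then (i, 0) else (ray0 n hn, x.2 - 1))
  else if x.1 = i then (i, x.2 + 1) else x

/-- The inverse of `gFun`. -/
def gInvFun (n : ℕ) (hn : 0 < n) (i : Fin n) : XH n → XH n := fun x =>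
  if x.1 = i then (if x.2 = 0 then (ray0 n hn, 0) else (i, x.2 - 1))
  else if x.1 = ray0 n hn then (ray0 n hn, x.2 + 1) else x

/-- The generator `g_i` of `H_n` (as a permutation): it translates the first ray
down by one, sends `(1,1)` to `(i,1)` and translates the ray `R_i` up by one. -/
def gGen (n : ℕ) (hn : 0 < n) (i : Fin n) (hi : i ≠ ray0 n hn) : Equiv.Perm (XH n) where
  toFun := gFun n hn i
  invFun := gInvFun n hn i
  left_inv := by
    rintro ⟨j, p⟩
    show gInvFun n hn i (gFun n hn i (j, p)) = (j, p)
    simp only [gFun, gInvFun]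
    split_ifs <;> simp_all [Prod.ext_iff] <;> omega
  right_inv := by
    rintro ⟨j, p⟩
    show gFun n hn i (gInvFun n hn i (j, p)) = (j, p)
    simp only [gFun, gInvFun]
    split_ifs <;> simp_all [Prod.ext_iff] <;> omega

/-- The translation vector of `g_i`. -/
def gVec (n : ℕ) (hn : 0 < n) (i : Fin n) : Fin n → ℤ :=
  fun j => if j = ray0 n hn then -1 else if j = i then 1 else 0

theorem gGen_mem (n : ℕ) (hn : 0 < n) (i : Fin n) (hi : i ≠ ray0 n hn) :
    gGen n hn i hi ∈ Houghton n := by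
  refine ⟨gVec n hn i, {(ray0 n hn, 0)}, ?_⟩
  rintro ⟨j, p⟩ hx
  rw [Finset.mem_singleton] at hx
  have hx' : j ≠ ray0 n hn ∨ p ≠ 0 := by
    by_contra h
    push_neg at h
    exact hx (by rw [h.1, h.2])
  show (gFun n hn i (j, p)).1 = j ∧ ((gFun n hn i (j, p)).2 : ℤ) = (p : ℤ) + gVec n hn i j
  simp only [gFun, gVec]
  split_ifs <;> simp_all [Prod.ext_iff] <;> omega

/-- The generator `g_i` as an element of `H_n`. -/
def hGen (n : ℕ) (hn : 0 < n) (i : Fin n) (hi : i ≠ ray0 n hn) : Houghton n :=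
  ⟨gGen n hn i hi, gGen_mem n hn i hi⟩

/-- The transposition `α` exchanging `(1,1)` and `(1,2)`. -/
def alphaPerm (n : ℕ) (hn : 0 < n) : Equiv.Perm (XH n) :=
  Equiv.swap (ray0 n hn, 0) (ray0 n hn, 1)

theorem alphaPerm_mem (n : ℕ) (hn : 0 < n) : alphaPerm n hn ∈ Houghton n := by
  refine ⟨0, {(ray0 n hn, 0), (ray0 n hn, 1)}, ?_⟩
  intro x hx
  simp only [Finset.mem_insert, Finset.mem_singleton, not_or] at hx
  rw [show alphaPerm n hn x = x from Equiv.swap_apply_of_ne_of_ne hx.1 hx.2]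
  simp

/-- `α` as an element of `H_n`. -/
def hAlpha (n : ℕ) (hn : 0 < n) : Houghton n := ⟨alphaPerm n hn, alphaPerm_mem n hn⟩

theorem alphaPerm_mem_FSym (n : ℕ) (hn : 0 < n) : alphaPerm n hn ∈ FSymSub n := by
  show {x | alphaPerm n hn x ≠ x}.Finite
  apply Set.Finite.subset ((Set.finite_singleton (ray0 n hn, 1)).insert (ray0 n hn, 0))
  intro x hx
  by_contra hc
  simp only [Set.mem_insert_iff, Set.mem_singleton_iff, not_or] at hc
  exact hx (Equiv.swap_apply_of_ne_of_ne hc.1 hc.2)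

theorem swap_mem_houghton {n : ℕ} (P Q : XH n) : Equiv.swap P Q ∈ Houghton n := by
  classical
  refine ⟨0, {P, Q}, ?_⟩
  intro x hx
  simp only [Finset.mem_insert, Finset.mem_singleton, not_or] at hx
  rw [Equiv.swap_apply_of_ne_of_ne hx.1 hx.2]
  simp

/-- The transposition exchanging two points, as an element of `H_n`. -/
def hSwap {n : ℕ} (P Q : XH n) : Houghton n := ⟨Equiv.swap P Q, swap_mem_houghton P Q⟩

/-- The set of generators `{g_2, …, g_n}` of `H_n`. -/
def houghtonGensOnly (n : ℕ) (hn : 0 < n) : Set (Houghton n) :=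
  {x | ∃ (i : Fin n) (hi : i ≠ ray0 n hn), x = hGen n hn i hi}

/-- The chosen generating set of `H_n`: `{g_2, …, g_n}` for `n ≠ 2`,
and `{g_2, α}` for `n = 2`. -/
def houghtonGenSet (n : ℕ) (hn : 0 < n) : Set (Houghton n) :=
  if n = 2 then houghtonGensOnly n hn ∪ {hAlpha n hn} else houghtonGensOnly n hn

/-- Word length with respect to a set of generators (and their inverses). -/
noncomputable def wordLength {G : Type*} [Group G] (S : Set G) (g : G) : ℕ :=
  sInf {k | ∃ l : List G, (∀ x ∈ l, x ∈ S ∨ x⁻¹ ∈ S) ∧ l.length = k ∧ l.prod = g}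

/-- The growth rate of an endomorphism `φ`:
`GR(φ) = sup_g limsup_k |φ^k(g)|^{1/k}`. -/
noncomputable def growthRate {G : Type*} [Group G] (S : Set G) (φ : G →* G) : ℝ :=
  ⨆ g : G, Filter.limsup
    (fun k : ℕ => (wordLength S ((⇑φ)^[k] g) : ℝ) ^ (1 / (k : ℝ))) Filter.atTop

/-- The orbit of `x` under the permutation `h`. -/
def permOrbit {α : Type*} (h : Equiv.Perm α) (x : α) : Set α :=
  Set.range (fun k : ℤ => (h ^ k) x)

/-- `x` has infinite orbit under `h` (`x` is an essential point of `h`). -/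
def InfiniteOrbit {α : Type*} (h : Equiv.Perm α) (x : α) : Prop :=
  (permOrbit h x).Infinite

/-- The image `φ(g_i)` as a permutation of `X_n`. -/
def imageGen {n : ℕ} (h0 : 0 < n) (φ : Houghton n →* Houghton n)
    (i : Fin n) (hi : i ≠ ray0 n h0) : Equiv.Perm (XH n) :=
  ↑(φ (hGen n h0 i hi))

/-- The image `φ(α)` as a permutation of `X_n`. -/
def imageAlpha {n : ℕ} (h0 : 0 < n) (φ : Houghton n →* Houghton n) : Equiv.Perm (XH n) :=
  ↑(φ (hAlpha n h0))

/-- A transposition-orbit of an involution: a pair `{x, h x}` with `h x ≠ x`. -/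
def TOrbit {Ω : Type*} (h : Equiv.Perm Ω) (T : Set Ω) : Prop :=
  ∃ x, h x ≠ x ∧ T = {x, h x}

/-- The zero-sum vectors in `ℤ^n`. -/
def zeroSum (n : ℕ) : AddSubgroup (Fin n → ℤ) where
  carrier := {m | ∑ j, m j = 0}
  zero_mem' := by simp
  add_mem' := by
    intro a b ha hb
    simp only [Set.mem_setOf_eq] at *
    simp [Finset.sum_add_distrib, ha, hb]
  neg_mem' := by
    intro a ha
    simp only [Set.mem_setOf_eq] at *
    simp [ha]

/-! ## Proof -/

theorem tv_mul {n : ℕ} {a b : Equiv.Perm (XH n)} {ma mb : Fin n → ℤ}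
    (ha : HasTranslationVector a ma) (hb : HasTranslationVector b mb) :
    HasTranslationVector (a * b) (ma + mb) := by
  classical
  obtain ⟨Ka, hKa⟩ := ha
  obtain ⟨Kb, hKb⟩ := hb
  refine ⟨Kb ∪ Ka.image b.symm, fun x hx => ?_⟩
  simp only [Finset.mem_union, not_or] at hx
  have hbx : b x ∉ Ka := fun hc =>
    hx.2 (Finset.mem_image.mpr ⟨b x, hc, b.symm_apply_apply x⟩)
  obtain ⟨hb1, hb2⟩ := hKb x hx.1
  obtain ⟨ha1, ha2⟩ := hKa (b x) hbx
  refine ⟨?_, ?_⟩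
  · show (a (b x)).1 = x.1
    rw [ha1, hb1]
  · show ((a (b x)).2 : ℤ) = (x.2 : ℤ) + (ma + mb) x.1
    rw [ha2, hb1, hb2, Pi.add_apply]
    ring

theorem tv_inv {n : ℕ} {a : Equiv.Perm (XH n)} {m : Fin n → ℤ}
    (ha : HasTranslationVector a m) : HasTranslationVector a⁻¹ (-m) := by
  classical
  obtain ⟨K, hK⟩ := ha
  refine ⟨K.image a, fun x hx => ?_⟩
  have hy : a⁻¹ x ∉ K := fun hc =>
    hx (Finset.mem_image.mpr ⟨a⁻¹ x, hc, a.apply_symm_apply x⟩)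
  obtain ⟨e1, e2⟩ := hK _ hy
  rw [show a (a⁻¹ x) = x from a.apply_symm_apply x] at e1 e2
  refine ⟨e1.symm, ?_⟩
  rw [← e1] at e2
  rw [Pi.neg_apply]
  omega

/-- Uniform height bound. -/
theorem tv_far {n : ℕ} {a : Equiv.Perm (XH n)} {m : Fin n → ℤ}
    (ha : HasTranslationVector a m) : ∃ N : ℕ, ∀ x : XH n, N ≤ x.2 →
      (a x).1 = x.1 ∧ ((a x).2 : ℤ) = (x.2 : ℤ) + m x.1 := by
  obtain ⟨K, hK⟩ := ha
  refine ⟨K.sup (fun x => x.2) + 1, fun x hx => hK x fun hc => ?_⟩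
  have := Finset.le_sup (f := fun x : XH n => x.2) hc
  change x.2 ≤ _ at this
  omega

theorem low_finite (n N : ℕ) : {x : XH n | x.2 < N}.Finite := by
  apply Set.Finite.subset (Set.finite_univ.prod (Set.finite_lt_nat N) :
    ((Set.univ : Set (Fin n)) ×ˢ {p : ℕ | p < N}).Finite)
  intro x hx
  exact ⟨trivial, hx⟩

theorem tv_zero_finite {n : ℕ} {a : Equiv.Perm (XH n)}
    (ha : HasTranslationVector a 0) : {x | a x ≠ x}.Finite := by
  obtain ⟨N, hN⟩ := tv_far ha
  apply (low_finite n N).subset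
  intro x hx
  by_contra hc
  simp only [Set.mem_ofPred_eq, not_lt] at hc
  obtain ⟨h1, h2⟩ := hN x hc
  simp only [Pi.zero_apply, add_zero, Nat.cast_inj] at h2
  exact hx (Prod.ext h1 h2)

theorem commutator_finite {n : ℕ} {a b : Equiv.Perm (XH n)}
    (ha : IsEventualTranslation a) (hb : IsEventualTranslation b) :
    {x | (a⁻¹ * b⁻¹ * a * b) x ≠ x}.Finite := by
  obtain ⟨ma, ha⟩ := ha
  obtain ⟨mb, hb⟩ := hb
  have := tv_mul (tv_mul (tv_mul (tv_inv ha) (tv_inv hb)) ha) hb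
  rw [show -ma + -mb + ma + mb = 0 by ring] at this
  exact tv_zero_finite this

/-- Going up: far out on a ray with positive translation. -/
theorem far_iter {n : ℕ} {a : Equiv.Perm (XH n)} {m : Fin n → ℤ} {N : ℕ}
    (hN : ∀ x : XH n, N ≤ x.2 → (a x).1 = x.1 ∧ ((a x).2 : ℤ) = (x.2 : ℤ) + m x.1)
    (x : XH n) (hx : N ≤ x.2) (hm : 0 < m x.1) (k : ℕ) :
    ((a ^ k) x).1 = x.1 ∧ x.2 + k ≤ ((a ^ k) x).2 := by
  induction k with
  | zero => simp
  | succ k ih =>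
    obtain ⟨i1, i2⟩ := ih
    have e : (a ^ (k + 1)) x = a ((a ^ k) x) := by rw [pow_succ']; rfl
    obtain ⟨h1, h2⟩ := hN ((a ^ k) x) (by omega)
    rw [e, h1, i1]
    refine ⟨rfl, ?_⟩
    rw [i1] at h2
    omega

theorem far_infinite {n : ℕ} {a : Equiv.Perm (XH n)} {m : Fin n → ℤ} {N : ℕ}
    (hN : ∀ x : XH n, N ≤ x.2 → (a x).1 = x.1 ∧ ((a x).2 : ℤ) = (x.2 : ℤ) + m x.1)
    (x : XH n) (hx : N ≤ x.2) (hm : 0 < m x.1)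
    (S : Set (XH n)) (hS : S.Finite) (hxS : x ∈ S) (haS : ∀ y ∈ S, a y ∈ S) : False := by
  have hk : ∀ k : ℕ, (a ^ k) x ∈ S := by
    intro k
    induction k with
    | zero => simpa
    | succ k ih => rw [pow_succ']; exact haS _ ih
  obtain ⟨B, hB⟩ := (hS.image (fun y : XH n => y.2)).bddAbove
  have h1 := (far_iter hN x hx hm (B + 1)).2
  have h2 : ((a ^ (B + 1)) x).2 ≤ B := hB ⟨_, hk _, rfl⟩
  omega

/-- Points moved by an eventual translation that lie in finite invariant sets have bounded
height. -/
theorem finite_orbit_bound {n : ℕ} {a : Equiv.Perm (XH n)} (ha : IsEventualTranslation a) :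
    ∃ N : ℕ, ∀ (S : Set (XH n)), S.Finite → (∀ y, y ∈ S ↔ a y ∈ S) →
      ∀ x ∈ S, N ≤ x.2 → a x = x := by
  obtain ⟨m, ha⟩ := ha
  obtain ⟨N1, h1⟩ := tv_far ha
  obtain ⟨N2, h2⟩ := tv_far (tv_inv ha)
  refine ⟨max N1 N2, fun S hS hinv x hx hxN => ?_⟩
  rcases lt_trichotomy (m x.1) 0 with hm | hm | hm
  · exfalso
    refine far_infinite h2 x (le_trans (le_max_right _ _) hxN) (by simpa using hm) S hS hx ?_
    intro y hy
    rw [hinv]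
    simpa using hy
  · obtain ⟨e1, e2⟩ := h1 x (le_trans (le_max_left _ _) hxN)
    rw [hm] at e2
    exact Prod.ext e1 (by omega)
  · exfalso
    exact far_infinite h1 x (le_trans (le_max_left _ _) hxN) hm S hS hx
      fun y hy => (hinv y).1 hy

/-- Forward end of an infinite orbit. -/
theorem forward_end {n : ℕ} {a : Equiv.Perm (XH n)} {m : Fin n → ℤ}
    (ha : HasTranslationVector a m) (x : XH n)
    (hinj : Function.Injective (fun k : ℕ => (a ^ k) x)) :
    ∃ r : Fin n, 0 < m r ∧ ∀ N : ℕ, ∃ k : ℕ, ((a ^ k) x).1 = r ∧ N ≤ ((a ^ k) x).2 := by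
  obtain ⟨r, hr⟩ := Finite.exists_infinite_fiber (fun k : ℕ => ((a ^ k) x).1)
  have hr' : {k : ℕ | ((a ^ k) x).1 = r}.Infinite := Set.infinite_coe_iff.1 hr
  have key : ∀ N : ℕ, ∃ k : ℕ, ((a ^ k) x).1 = r ∧ N ≤ ((a ^ k) x).2 ∧ N < k := by
    intro N
    have hf : ({k : ℕ | ((a ^ k) x).2 < N} ∪ {k | k ≤ N}).Finite :=
      ((low_finite n N).preimage hinj.injOn).union (Set.finite_le_nat N)
    obtain ⟨k, hk, hk2⟩ := (hr'.sdiff hf).nonempty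
    simp only [Set.mem_union, Set.mem_ofPred_eq, not_or, not_lt, not_le] at hk2
    exact ⟨k, hk, hk2⟩
  refine ⟨r, ?_, fun N => let ⟨k, h1, h2, _⟩ := key N; ⟨k, h1, h2⟩⟩
  by_contra hm
  obtain ⟨N1, h1⟩ := tv_far ha
  obtain ⟨N2, h2⟩ := tv_far (tv_inv ha)
  obtain ⟨k, k1, k2, k3⟩ := key (max (max N1 N2) x.2)
  simp only [sup_le_iff] at k2
  rcases lt_or_eq_of_le (not_lt.1 hm) with hm | hm
  · have := (far_iter h2 ((a ^ k) x) k2.1.2 (by rw [k1]; simpa using hm) k).2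
    have e : (a⁻¹ ^ k) ((a ^ k) x) = x := by
      rw [← Equiv.Perm.mul_apply, inv_pow, inv_mul_cancel]; rfl
    rw [e] at this
    simp only [max_lt_iff] at k3
    omega
  · obtain ⟨e1, e2⟩ := h1 _ k2.1.1
    rw [k1, hm] at e2
    have : a ((a ^ k) x) = (a ^ k) x := Prod.ext e1 (by omega)
    have h3 : (a ^ (k + 1)) x = (a ^ k) x := by rw [pow_succ']; exact this
    have := hinj h3
    omega
theorem T_conj {n : ℕ} (ρ : Houghton n →* Equiv.Perm (XH n)) (h : Houghton n) (P Q x : XH n) :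
    ρ (hSwap (h.1 P) (h.1 Q)) (ρ h x) = ρ h (ρ (hSwap P Q) x) := by
  have : hSwap (h.1 P) (h.1 Q) * h = h * hSwap P Q :=
    Subtype.ext (Equiv.mul_swap_eq_swap_mul h.1 P Q).symm
  rw [← Equiv.Perm.mul_apply, ← Equiv.Perm.mul_apply, ← map_mul, ← map_mul, this]

theorem hSwap_comm {n : ℕ} (P Q : XH n) : hSwap P Q = hSwap Q P :=
  Subtype.ext (Equiv.swap_comm P Q)

theorem hSwap_apply_of_ne {n : ℕ} {P Q R : XH n} (h1 : R ≠ P) (h2 : R ≠ Q) :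
    (hSwap P Q).1 R = R := Equiv.swap_apply_of_ne_of_ne h1 h2

theorem hSwap_left {n : ℕ} (P Q : XH n) : (hSwap P Q).1 P = Q := Equiv.swap_apply_left P Q

theorem hSwap_right {n : ℕ} (P Q : XH n) : (hSwap P Q).1 Q = P := Equiv.swap_apply_right P Q

theorem T_invol {n : ℕ} (ρ : Houghton n →* Equiv.Perm (XH n)) (P Q x : XH n) :
    ρ (hSwap P Q) (ρ (hSwap P Q) x) = x := by
  have : hSwap P Q * hSwap P Q = 1 := Subtype.ext (Equiv.swap_mul_self P Q)
  rw [← Equiv.Perm.mul_apply, ← map_mul, this, map_one]; rfl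

/-- Double transitivity with fixed points. -/
theorem two_trans {n : ℕ} (q q' f f' : XH n) (hq : q ≠ q') (hf : f ≠ f') :
    ∃ u : Houghton n, u.1 q = f ∧ u.1 q' = f' ∧
      ∀ e, e ≠ q → e ≠ q' → e ≠ f → e ≠ f' → u.1 e = e := by
  refine ⟨hSwap ((hSwap q f).1 q') f' * hSwap q f, ?_, ?_, ?_⟩
  · show (hSwap ((hSwap q f).1 q') f').1 ((hSwap q f).1 q) = f
    rw [hSwap_left]
    refine hSwap_apply_of_ne ?_ hf
    intro h
    apply hq
    apply (hSwap q f).1.injective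
    rw [hSwap_left]; exact h
  · exact hSwap_left _ _
  · intro e h1 h2 h3 h4
    show (hSwap ((hSwap q f).1 q') f').1 ((hSwap q f).1 e) = e
    rw [hSwap_apply_of_ne h1 h3]
    refine hSwap_apply_of_ne ?_ h4
    intro h
    apply h2
    apply (hSwap q f).1.injective
    rw [hSwap_apply_of_ne h1 h3]; exact h

section Action

variable {n : ℕ} (ρ : Houghton n →* Equiv.Perm (XH n))

/-- all transpositions act with finite support -/
def FinT (ρ : Houghton n →* Equiv.Perm (XH n)) : Prop :=
  ∀ P Q : XH n, {x | ρ (hSwap P Q) x ≠ x}.Finite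

theorem finT_of_one {a b : XH n} (hab : a ≠ b) (h : {x | ρ (hSwap a b) x ≠ x}.Finite) :
    FinT ρ := by
  intro P Q
  by_cases hPQ : P = Q
  · subst hPQ
    have : hSwap P P = 1 := Subtype.ext (Equiv.swap_self P)
    simp [this]
  obtain ⟨u, h1, h2, -⟩ := two_trans a b P Q hab hPQ
  refine (h.image (ρ u)).subset ?_
  intro x hx
  refine ⟨(ρ u).symm x, ?_, (ρ u).apply_symm_apply x⟩
  intro hc
  apply hx
  have := T_conj ρ u a b ((ρ u).symm x)
  rw [h1, h2, hc] at this
  simpa using this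

theorem mem_supp {a b e q x : XH n} (h1 : e ≠ a) (h2 : e ≠ b) (h3 : q ≠ a) (h4 : q ≠ b)
    (hx : ρ (hSwap a b) x ≠ x) : ρ (hSwap a b) (ρ (hSwap e q) x) ≠ ρ (hSwap e q) x := by
  have := T_conj ρ (hSwap e q) a b x
  rw [hSwap_apply_of_ne h1.symm h3.symm, hSwap_apply_of_ne h2.symm h4.symm] at this
  rw [this]
  exact fun h => hx ((ρ (hSwap e q)).injective h)

theorem L1 (hn : 0 < n) (hρ : FinT ρ) {a b e f f' x : XH n} (hx : ρ (hSwap a b) x ≠ x)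
    (ea : e ≠ a) (eb : e ≠ b) (fa : f ≠ a) (fb : f ≠ b) (fa' : f' ≠ a) (fb' : f' ≠ b)
    (ef : e ≠ f) (ef' : e ≠ f') :
    ρ (hSwap e f) x = ρ (hSwap e f') x := by
  classical
  by_cases hff : f = f'
  · rw [hff]
  have : Nonempty (Fin n) := ⟨⟨0, hn⟩⟩
  let S : Set (XH n) := {x | ρ (hSwap a b) x ≠ x}
  have hS : Finite S := hρ a b
  let Q : Set (XH n) := ({a, b, e} : Set (XH n))ᶜ
  have hQ : Infinite Q := ((Set.toFinite ({a, b, e} : Set (XH n))).infinite_compl).to_subtype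
  have hq : ∀ q : Q, q.1 ≠ a ∧ q.1 ≠ b ∧ q.1 ≠ e := by
    intro q
    have h : ¬ (q.1 = a ∨ q.1 = b ∨ q.1 = e) := q.2
    simpa only [not_or] using h
  let F : Q → (S → S) := fun q y =>
    ⟨ρ (hSwap e q.1) y.1, mem_supp ρ ea eb (hq q).1 (hq q).2.1 y.2⟩
  obtain ⟨q, q', hqq, hF⟩ := Finite.exists_ne_map_eq_of_infinite F
  obtain ⟨u, u1, u2, u3⟩ := two_trans q.1 q'.1 f f' (fun h => hqq (Subtype.ext h)) hff
  have ue : u.1 e = e := u3 e (hq q).2.2.symm (hq q').2.2.symm ef ef'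
  have ua : u.1 a = a := u3 a (hq q).1.symm (hq q').1.symm fa.symm fa'.symm
  have ub : u.1 b = b := u3 b (hq q).2.1.symm (hq q').2.1.symm fb.symm fb'.symm
  obtain ⟨y, rfl⟩ := (ρ u).surjective x
  have hy : y ∈ S := by
    intro hc
    apply hx
    have := T_conj ρ u a b y
    rw [ua, ub, hc] at this
    exact this
  have h1 := T_conj ρ u e q.1 y
  have h2 := T_conj ρ u e q'.1 y
  rw [ue, u1] at h1
  rw [ue, u2] at h2
  rw [h1, h2]
  have := congrArg Subtype.val (congrFun hF ⟨y, hy⟩)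
  exact congrArg (ρ u) this

/-- if `(a b)` moves `x`, all transpositions off `a, b` act in the same way on `x` -/
theorem L2 (hn : 0 < n) (hρ : FinT ρ) {a b e f e' f' x : XH n} (hx : ρ (hSwap a b) x ≠ x)
    (ea : e ≠ a) (eb : e ≠ b) (fa : f ≠ a) (fb : f ≠ b)
    (ea' : e' ≠ a) (eb' : e' ≠ b) (fa' : f' ≠ a) (fb' : f' ≠ b)
    (ef : e ≠ f) (ef' : e' ≠ f') :
    ρ (hSwap e f) x = ρ (hSwap e' f') x := by
  by_cases h : e = f'
  · subst h
    rw [L1 ρ hn hρ hx ea eb fa fb ea' eb' ef ef'.symm, hSwap_comm]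
  · rw [L1 ρ hn hρ hx ea eb fa fb fa' fb' ef h, hSwap_comm e f', hSwap_comm e' f']
    exact L1 ρ hn hρ hx fa' fb' ea eb ea' eb' (Ne.symm h) ef'.symm

theorem exists_two (hn : 0 < n) (s : Finset (XH n)) : ∃ e f : XH n, e ≠ f ∧ e ∉ s ∧ f ∉ s := by
  classical
  have : Nonempty (Fin n) := ⟨⟨0, hn⟩⟩
  obtain ⟨e, he⟩ := Infinite.exists_notMem_finset s
  obtain ⟨f, hf⟩ := Infinite.exists_notMem_finset (insert e s)
  simp only [Finset.mem_insert, not_or] at hf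
  exact ⟨e, f, fun h => hf.1 h.symm, he, hf.2⟩

/-- `x` is moved by every transposition -/
def IsSign (x : XH n) : Prop := ∀ p q : XH n, p ≠ q → ρ (hSwap p q) x ≠ x

/-- `x` is fixed by every transposition -/
def IsFix (x : XH n) : Prop := ∀ p q : XH n, ρ (hSwap p q) x = x

/-- the transpositions moving `x` are exactly those moving `a` -/
def IsCtr (x a : XH n) : Prop := ∀ p q : XH n, p ≠ q → (ρ (hSwap p q) x ≠ x ↔ (p = a ∨ q = a))

theorem sign_of_disjoint (hn : 0 < n) (hρ : FinT ρ) {a b c d x : XH n}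
    (h1 : ρ (hSwap a b) x ≠ x) (h2 : ρ (hSwap c d) x ≠ x) (hab : a ≠ b) (hcd : c ≠ d)
    (ca : c ≠ a) (cb : c ≠ b) (da : d ≠ a) (db : d ≠ b) : IsSign ρ x := by
  classical
  intro p q hpq
  obtain ⟨e, f, hef, he, hf⟩ := exists_two hn {a, b, p, q}
  simp only [Finset.mem_insert, Finset.mem_singleton, not_or] at he hf
  have h3 : ρ (hSwap e f) x ≠ x := by
    rw [L2 ρ hn hρ h1 he.1 he.2.1 hf.1 hf.2.1 ca cb da db hef hcd]; exact h2
  rw [L2 ρ hn hρ h3 (Ne.symm he.2.2.1) (Ne.symm hf.2.2.1) (Ne.symm he.2.2.2) (Ne.symm hf.2.2.2)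
    (Ne.symm he.1) (Ne.symm hf.1) (Ne.symm he.2.1) (Ne.symm hf.2.1) hpq hab]
  exact h1

/-- star lemma -/
theorem star (hn : 0 < n) (hρ : FinT ρ) {a b c x : XH n} (hns : ¬ IsSign ρ x)
    (hab : a ≠ b) (hac : a ≠ c) (hbc : b ≠ c)
    (h1 : ρ (hSwap a b) x ≠ x) (h2 : ρ (hSwap a c) x ≠ x) : IsCtr ρ x a := by
  classical
  have dis : ∀ {p q r s : XH n}, p ≠ q → r ≠ s → r ≠ p → r ≠ q → s ≠ p → s ≠ q →
      ρ (hSwap p q) x ≠ x → ρ (hSwap r s) x = x := by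
    intro p q r s h1 h2 h3 h4 h5 h6 h7
    by_contra h8
    exact hns (sign_of_disjoint ρ hn hρ h7 h8 h1 h2 h3 h4 h5 h6)
  have had : ∀ d, d ≠ a → ρ (hSwap a d) x ≠ x := by
    intro d hd
    by_cases db : d = b
    · rw [db]; exact h1
    by_cases dc : d = c
    · rw [dc]; exact h2
    have h3 : ρ (hSwap c d) x = x := dis hab (Ne.symm dc) hac.symm hbc.symm hd db h1
    have h4 := T_conj ρ (hSwap c d) a c x
    rw [hSwap_apply_of_ne hac hd.symm, hSwap_left, h3] at h4
    rw [h4]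
    intro h5
    apply h2
    apply (ρ (hSwap c d)).injective
    rw [h5, h3]
  intro p q hpq
  constructor
  · intro hm
    by_contra hc
    rw [not_or] at hc
    obtain ⟨d, -, -, hd, -⟩ := exists_two hn {a, p, q}
    simp only [Finset.mem_insert, Finset.mem_singleton, not_or] at hd
    exact hm (dis (Ne.symm hd.1) hpq hc.1 (Ne.symm hd.2.1) hc.2 (Ne.symm hd.2.2) (had d hd.1))
  · rintro (rfl | rfl)
    · exact had q hpq.symm
    · rw [hSwap_comm]; exact had p hpq

theorem trichotomy (hn : 0 < n) (hρ : FinT ρ) (x : XH n) :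
    IsFix ρ x ∨ IsSign ρ x ∨ ∃ a, IsCtr ρ x a := by
  classical
  by_cases hf : IsFix ρ x
  · exact Or.inl hf
  by_cases hs : IsSign ρ x
  · exact Or.inr (Or.inl hs)
  refine Or.inr (Or.inr ?_)
  simp only [IsFix, not_forall] at hf
  obtain ⟨a, b, h1⟩ := hf
  have hab : a ≠ b := by
    rintro rfl
    apply h1
    have : hSwap a a = 1 := Subtype.ext (Equiv.swap_self a)
    rw [this, map_one]; rfl
  obtain ⟨c, -, -, hc, -⟩ := exists_two hn {a, b}
  simp only [Finset.mem_insert, Finset.mem_singleton, not_or] at hc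
  by_cases h2 : ρ (hSwap a c) x = x
  · refine ⟨b, star ρ hn hρ hs hab.symm (Ne.symm hc.2) (Ne.symm hc.1)
      (by rwa [hSwap_comm]) (fun h3 => h1 ?_)⟩
    have h4 := T_conj ρ (hSwap a c) b c x
    rw [hSwap_apply_of_ne hab.symm (Ne.symm hc.2), hSwap_right, h2, h3, h2] at h4
    rw [hSwap_comm]; exact h4
  · exact ⟨a, star ρ hn hρ hs hab (Ne.symm hc.1) (Ne.symm hc.2) h1 h2⟩

theorem ctr_equiv {x a : XH n} (h : IsCtr ρ x a) (g : Houghton n) :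
    IsCtr ρ (ρ g x) (g.1 a) := by
  intro p q hpq
  obtain ⟨p, rfl⟩ := g.1.surjective p
  obtain ⟨q, rfl⟩ := g.1.surjective q
  rw [T_conj, (ρ g).injective.ne_iff, h p q (fun h => hpq (by rw [h])), g.1.injective.eq_iff,
    g.1.injective.eq_iff]

theorem ctr_unique (hn : 0 < n) {x a b : XH n} (h : IsCtr ρ x a) (h' : IsCtr ρ x b) :
    a = b := by
  classical
  by_contra hab
  obtain ⟨c, -, -, hc, -⟩ := exists_two hn {a, b}
  simp only [Finset.mem_insert, Finset.mem_singleton, not_or] at hc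
  have h1 := (h a c (Ne.symm hc.1)).2 (Or.inl rfl)
  rcases (h' a c (Ne.symm hc.1)).1 h1 with h2 | h2
  · exact hab h2
  · exact hc.2 h2

theorem fiber_finite (hn : 0 < n) (hρ : FinT ρ) (a : XH n) : {x | IsCtr ρ x a}.Finite := by
  classical
  obtain ⟨c, -, -, hc, -⟩ := exists_two hn {a}
  simp only [Finset.mem_singleton] at hc
  exact (hρ a c).subset fun x hx => (hx a c (Ne.symm hc)).2 (Or.inl rfl)

theorem fix_equiv {x : XH n} (h : IsFix ρ x) (g : Houghton n) : IsFix ρ (ρ g x) := by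
  intro p q
  obtain ⟨p, rfl⟩ := g.1.surjective p
  obtain ⟨q, rfl⟩ := g.1.surjective q
  rw [T_conj, h p q]

theorem sign_equiv {x : XH n} (h : IsSign ρ x) (g : Houghton n) : IsSign ρ (ρ g x) := by
  intro p q hpq
  obtain ⟨p, rfl⟩ := g.1.surjective p
  obtain ⟨q, rfl⟩ := g.1.surjective q
  rw [T_conj, (ρ g).injective.ne_iff]
  exact h p q (fun h => hpq (by rw [h]))

theorem exists_ctr (hn : 0 < n) (hρ : FinT ρ) (hinj : Function.Injective ρ) :
    ∃ x a, IsCtr ρ x a := by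
  classical
  obtain ⟨e, f, hef, -, -⟩ := exists_two hn ∅
  obtain ⟨f', -, -, hf', -⟩ := exists_two hn {e, f}
  simp only [Finset.mem_insert, Finset.mem_singleton, not_or] at hf'
  have hne : ρ (hSwap e f) ≠ ρ (hSwap e f') := by
    intro h
    have h1 := congrArg (fun g : Houghton n => g.1 e) (hinj h)
    simp only [hSwap_left] at h1
    exact hf'.2 h1.symm
  obtain ⟨x, hx⟩ : ∃ x, ρ (hSwap e f) x ≠ ρ (hSwap e f') x := by
    by_contra hc
    push Not at hc
    exact hne (Equiv.ext hc)
  rcases trichotomy ρ hn hρ x with h | h | ⟨a, h⟩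
  · exact absurd ((h e f).trans (h e f').symm) hx
  · exfalso
    obtain ⟨a, b, hab, ha, hb⟩ := exists_two hn {e, f, f'}
    simp only [Finset.mem_insert, Finset.mem_singleton, not_or] at ha hb
    exact hx (L1 ρ hn hρ (h a b hab) (Ne.symm ha.1) (Ne.symm hb.1) (Ne.symm ha.2.1)
      (Ne.symm hb.2.1) (Ne.symm ha.2.2) (Ne.symm hb.2.2) hef (Ne.symm hf'.1))
  · exact ⟨x, a, h⟩

theorem exists_section (hn : 0 < n) (hρ : FinT ρ) (hinj : Function.Injective ρ) :
    ∃ s : XH n → XH n, ∀ P, IsCtr ρ (s P) P := by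
  obtain ⟨x, a, h⟩ := exists_ctr ρ hn hρ hinj
  refine ⟨fun P => ρ (hSwap a P) x, fun P => ?_⟩
  have := ctr_equiv ρ h (hSwap a P)
  rwa [hSwap_left] at this

/-- stabilizer lemma -/
theorem stab (hn : 0 < n) (hρ : FinT ρ) (hE : ∀ g, IsEventualTranslation (ρ g))
    {h : Houghton n} (hinf : {p | h.1 p = p}.Infinite) {x a : XH n} (hx : IsCtr ρ x a)
    (ha : h.1 a = a) : ρ h x = x := by
  obtain ⟨N, hN⟩ := finite_orbit_bound (hE h)
  let s : XH n → XH n := fun P => ρ (hSwap a P) x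
  have hs : ∀ P, IsCtr ρ (s P) P := fun P => by
    have := ctr_equiv ρ hx (hSwap a P)
    rwa [hSwap_left] at this
  have sinj : Function.Injective s := fun P Q hPQ =>
    ctr_unique ρ hn (hs P) (by rw [hPQ]; exact hs Q)
  obtain ⟨p, hp, hp2⟩ := (hinf.sdiff ((low_finite n N).preimage sinj.injOn)).nonempty
  simp only [Set.mem_preimage, Set.mem_ofPred_eq, not_lt] at hp hp2
  have hfix : ρ h (s p) = s p := by
    refine hN {x | IsCtr ρ x p} (fiber_finite ρ hn hρ p) ?_ _ (hs p) hp2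
    intro y
    constructor
    · intro hy
      have := ctr_equiv ρ hy h
      rwa [hp] at this
    · intro hy
      have := ctr_equiv ρ hy h⁻¹
      have e : (h⁻¹).1 p = p := by
        show (h.1)⁻¹ p = p
        rw [Equiv.Perm.inv_eq_iff_eq, hp]
      rw [e, map_inv] at this
      simpa using this
  have h1 := T_conj ρ h a p x
  rw [ha, hp] at h1
  change _ = ρ h (s p) at h1
  rw [hfix] at h1
  exact (ρ (hSwap a p)).injective h1

/-- finitary elements fix `IsFix` points -/
theorem fix_fin {x : XH n} (hx : IsFix ρ x) (u : Houghton n) (hu : {y | u.1 y ≠ y}.Finite) :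
    ρ u x = x := by
  classical
  let S : Subgroup (Houghton n) := (MulAction.stabilizer (Equiv.Perm (XH n)) x).comap ρ
  have h1 : Subgroup.closure {σ : Equiv.Perm (XH n) | σ.IsSwap} ≤ S.map (Houghton n).subtype := by
    rw [Subgroup.closure_le]
    rintro σ ⟨p, q, -, rfl⟩
    exact ⟨hSwap p q, hx p q, rfl⟩
  have h2 : u.1 ∈ Subgroup.closure {σ : Equiv.Perm (XH n) | σ.IsSwap} := by
    rw [mem_closure_isSwap']
    exact hu
  obtain ⟨v, hv, hvu⟩ := h1 h2
  have : v = u := Subtype.ext hvu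
  subst this
  exact hv

theorem fix_commute {x : XH n} (hx : IsFix ρ x) (g h : Houghton n) (hg : ρ g x = x) :
    ρ g (ρ h x) = ρ h x := by
  have h1 : ρ (g⁻¹ * h⁻¹ * g * h) x = x := fix_fin ρ hx _ (commutator_finite g.2 h.2)
  have h2 : g * h = h * g * (g⁻¹ * h⁻¹ * g * h) := by group
  have h3 : ρ (g * h) x = ρ (h * g * (g⁻¹ * h⁻¹ * g * h)) x := by rw [← h2]
  rw [map_mul, map_mul ρ (h * g), Equiv.Perm.mul_apply, Equiv.Perm.mul_apply, h1, map_mul,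
    Equiv.Perm.mul_apply, hg] at h3
  exact h3

end Action
theorem hGen_tv {n : ℕ} (hn : 0 < n) (i : Fin n) (hi : i ≠ ray0 n hn) :
    HasTranslationVector (hGen n hn i hi).1 (gVec n hn i) := by
  refine ⟨{(ray0 n hn, 0)}, ?_⟩
  rintro ⟨j, p⟩ hx
  rw [Finset.mem_singleton] at hx
  have hx' : j ≠ ray0 n hn ∨ p ≠ 0 := by
    by_contra h
    push Not at h
    exact hx (by rw [h.1, h.2])
  show (gFun n hn i (j, p)).1 = j ∧ ((gFun n hn i (j, p)).2 : ℤ) = (p : ℤ) + gVec n hn i j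
  simp only [gFun, gVec]
  split_ifs <;> simp_all [Prod.ext_iff] <;> omega

theorem hGen_ray0 {n : ℕ} (hn : 0 < n) (i : Fin n) (hi : i ≠ ray0 n hn) (p : ℕ) :
    (hGen n hn i hi).1 (ray0 n hn, p + 1) = (ray0 n hn, p) := by
  show gFun n hn i (ray0 n hn, p + 1) = _
  simp [gFun]

theorem hGen_ray0_zero {n : ℕ} (hn : 0 < n) (i : Fin n) (hi : i ≠ ray0 n hn) :
    (hGen n hn i hi).1 (ray0 n hn, 0) = (i, 0) := by
  show gFun n hn i (ray0 n hn, 0) = _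
  simp [gFun]

theorem hGen_rayi {n : ℕ} (hn : 0 < n) (i : Fin n) (hi : i ≠ ray0 n hn) (p : ℕ) :
    (hGen n hn i hi).1 (i, p) = (i, p + 1) := by
  show gFun n hn i (i, p) = _
  simp [gFun, hi]

theorem hGen_other {n : ℕ} (hn : 0 < n) (i : Fin n) (hi : i ≠ ray0 n hn) (y : XH n)
    (h1 : y.1 ≠ ray0 n hn) (h2 : y.1 ≠ i) : (hGen n hn i hi).1 y = y := by
  show gFun n hn i y = _
  simp [gFun, h1, h2]

theorem hGen_pow_ray0 {n : ℕ} (hn : 0 < n) (i : Fin n) (hi : i ≠ ray0 n hn) (k p : ℕ) :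
    ((hGen n hn i hi).1 ^ k) (ray0 n hn, p + k) = (ray0 n hn, p) := by
  induction k with
  | zero => simp
  | succ k ih =>
    rw [pow_succ, Equiv.Perm.mul_apply, ← add_assoc, hGen_ray0, ih]

theorem hGen_pow_rayi {n : ℕ} (hn : 0 < n) (i : Fin n) (hi : i ≠ ray0 n hn) (k p : ℕ) :
    ((hGen n hn i hi).1 ^ k) (i, p) = (i, p + k) := by
  induction k with
  | zero => simp
  | succ k ih =>
    rw [pow_succ', Equiv.Perm.mul_apply, ih, hGen_rayi, add_assoc]

/-- leaving the first ray -/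
theorem hGen_pow_le {n : ℕ} (hn : 0 < n) (i : Fin n) (hi : i ≠ ray0 n hn) (k p p' : ℕ)
    (h : ((hGen n hn i hi).1 ^ k) (ray0 n hn, p) = (ray0 n hn, p')) : p = p' + k := by
  by_cases hk : k ≤ p
  · obtain ⟨q, rfl⟩ := Nat.exists_eq_add_of_le' hk
    rw [hGen_pow_ray0] at h
    have := congrArg Prod.snd h
    simp only at this
    omega
  · exfalso
    obtain ⟨l, rfl⟩ : ∃ l, k = l + 1 + p := ⟨k - p - 1, by omega⟩
    rw [pow_add, Equiv.Perm.mul_apply] at h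
    have e := hGen_pow_ray0 hn i hi p 0
    rw [zero_add] at e
    rw [e, pow_succ, Equiv.Perm.mul_apply, hGen_ray0_zero, hGen_pow_rayi] at h
    exact hi (congrArg Prod.fst h)

/-- `g_i g_j = g_j g_i α`. -/
theorem gen_comm {n : ℕ} (hn : 0 < n) (i j : Fin n) (hi : i ≠ ray0 n hn) (hj : j ≠ ray0 n hn)
    (hij : i ≠ j) : (hGen n hn i hi)⁻¹ * (hGen n hn j hj)⁻¹ * hGen n hn i hi * hGen n hn j hj =
      hSwap (ray0 n hn, 0) (ray0 n hn, 1) := by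
  have key : hGen n hn i hi * hGen n hn j hj =
      hGen n hn j hj * hGen n hn i hi * hSwap (ray0 n hn, 0) (ray0 n hn, 1) := by
    apply Subtype.ext
    apply Equiv.ext
    intro y
    show (hGen n hn i hi).1 ((hGen n hn j hj).1 y) =
      (hGen n hn j hj).1 ((hGen n hn i hi).1 ((hSwap (ray0 n hn, 0) (ray0 n hn, 1)).1 y))
    obtain ⟨r, p⟩ := y
    by_cases h0 : r = ray0 n hn
    · subst h0
      rcases p with _ | _ | p
      · rw [hSwap_left, hGen_ray0_zero, hGen_other hn i hi (j, 0) hj hij.symm,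
          show (1 : ℕ) = 0 + 1 from rfl, hGen_ray0, hGen_ray0_zero]
      · rw [show (ray0 n hn, 0 + 1) = (ray0 n hn, 1) from rfl, hSwap_right,
          show (1 : ℕ) = 0 + 1 from rfl, hGen_ray0, hGen_ray0_zero,
          hGen_other hn j hj (i, 0) hi hij]
      · rw [hSwap_apply_of_ne (by simp) (by simp), hGen_ray0, hGen_ray0, hGen_ray0, hGen_ray0]
    · rw [hSwap_apply_of_ne (fun h => h0 (congrArg Prod.fst h))
        (fun h => h0 (congrArg Prod.fst h))]
      by_cases h1 : r = i
      · subst h1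
        rw [hGen_other hn j hj _ hi hij, hGen_rayi, hGen_other hn j hj _ hi hij]
      · by_cases h2 : r = j
        · subst h2
          rw [hGen_other hn i hi (r, p) hj hij.symm, hGen_rayi,
            hGen_other hn i hi _ hj hij.symm]
        · rw [hGen_other hn j hj _ h0 h2, hGen_other hn i hi _ h0 h1,
            hGen_other hn j hj _ h0 h2]
  have e : (hGen n hn i hi)⁻¹ * (hGen n hn j hj)⁻¹ * hGen n hn i hi * hGen n hn j hj =
    (hGen n hn i hi)⁻¹ * (hGen n hn j hj)⁻¹ * (hGen n hn i hi * hGen n hn j hj) := by group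
  rw [e, key]
  group

theorem separate {n : ℕ} (hn : 3 ≤ n) (h0 : 0 < n) (r r' : Fin n) (hr : r ≠ r') :
    ∃ (g : Houghton n) (m : Fin n → ℤ), HasTranslationVector g.1 m ∧ m r = 0 ∧ m r' ≠ 0 := by
  have third : ∀ a b : Fin n, ∃ c, c ≠ a ∧ c ≠ b := by
    intro a b
    have : ∃ c : Fin n, c ∉ ({a, b} : Finset (Fin n)) := by
      by_contra hc
      push Not at hc
      have h1 : (Finset.univ : Finset (Fin n)) ⊆ {a, b} := fun c _ => hc c
      have h2 := (Finset.card_le_card h1).trans (Finset.card_le_two)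
      simp at h2
      omega
    obtain ⟨c, hc⟩ := this
    simp only [Finset.mem_insert, Finset.mem_singleton, not_or] at hc
    exact ⟨c, hc⟩
  by_cases h1 : r = ray0 n h0
  · obtain ⟨s, s1, s2⟩ := third r r'
    have hs : s ≠ ray0 n h0 := h1 ▸ s1
    have hr' : r' ≠ ray0 n h0 := fun h => hr (h1.trans h.symm)
    refine ⟨(hGen n h0 s hs)⁻¹ * hGen n h0 r' hr', _,
      tv_mul (tv_inv (hGen_tv h0 s hs)) (hGen_tv h0 r' hr'), ?_, ?_⟩
    · simp [gVec, h1]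
    · simp [gVec, hr', s2.symm]
  · by_cases h2 : r' = ray0 n h0
    · obtain ⟨s, s1, s2⟩ := third r r'
      have hs : s ≠ ray0 n h0 := h2 ▸ s2
      exact ⟨hGen n h0 s hs, _, hGen_tv h0 s hs, by simp [gVec, h1, s1.symm], by simp [gVec, h2]⟩
    · exact ⟨hGen n h0 r' h2, _, hGen_tv h0 r' h2, by simp [gVec, h1, hr], by simp [gVec, h2]⟩

/-- ray correspondence -/
theorem ray_corr {n : ℕ} (hn : 3 ≤ n) (h0 : 0 < n) (ρ : Houghton n →* Equiv.Perm (XH n))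
    (hρ : FinT ρ) (hE : ∀ g, IsEventualTranslation (ρ g)) (hinj : Function.Injective ρ) :
    ∃ κ : Fin n → Fin n, Function.Surjective κ ∧ ∀ r (g : Houghton n) (m M : Fin n → ℤ),
      HasTranslationVector g.1 m → HasTranslationVector (ρ g) M →
      (m r = 0 ↔ M (κ r) = 0) := by
  obtain ⟨s, hs⟩ := exists_section ρ h0 hρ hinj
  have sinj : Function.Injective s := fun P Q hPQ =>
    ctr_unique ρ h0 (hs P) (by rw [hPQ]; exact hs Q)
  have hk : ∀ r : Fin n, ∃ k : Fin n, {p : ℕ | (s (r, p)).1 = k}.Infinite := by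
    intro r
    obtain ⟨k, hk⟩ := Finite.exists_infinite_fiber (fun p : ℕ => (s (r, p)).1)
    exact ⟨k, Set.infinite_coe_iff.1 hk⟩
  choose κ hκ using hk
  have far : ∀ r N, ∃ p : ℕ, (s (r, p)).1 = κ r ∧ N ≤ (s (r, p)).2 ∧ N ≤ p := by
    intro r N
    have hi : Function.Injective (fun p : ℕ => s (r, p)) := fun p q h =>
      congrArg Prod.snd (sinj h)
    have hf : ({p : ℕ | (s (r, p)).2 < N} ∪ {p | p < N}).Finite :=
      ((low_finite n N).preimage hi.injOn).union (Set.finite_lt_nat N)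
    obtain ⟨k, hk, hk2⟩ := ((hκ r).sdiff hf).nonempty
    simp only [Set.mem_union, Set.mem_ofPred_eq, not_or, not_lt] at hk2
    exact ⟨k, hk, hk2⟩
  have main : ∀ r (g : Houghton n) (m M : Fin n → ℤ),
      HasTranslationVector g.1 m → HasTranslationVector (ρ g) M →
      (m r = 0 ↔ M (κ r) = 0) := by
    intro r g m M hm hM
    obtain ⟨N1, h1⟩ := tv_far hm
    obtain ⟨N2, h2⟩ := tv_far hM
    obtain ⟨p, p1, p2, p3⟩ := far r (max N1 N2)
    have a1 := h1 (r, p) (le_trans (le_max_left _ _) p3)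
    have a2 := h2 (s (r, p)) (le_trans (le_max_right _ _) p2)
    rw [p1] at a2
    constructor
    · intro hz
      have fixp : ∀ q, N1 ≤ q → g.1 (r, q) = (r, q) := by
        intro q hq
        obtain ⟨e1, e2⟩ := h1 (r, q) hq
        simp only [hz] at e1 e2
        exact Prod.ext e1 (by simp only; omega)
      have hinf : {y | g.1 y = y}.Infinite := by
        have : (Set.image (fun q : ℕ => ((r, q) : XH n)) (Set.Ici N1)).Infinite :=
          (Set.Ici_infinite N1).image (fun p _ q _ h => congrArg Prod.snd h)
        refine this.mono ?_
        rintro _ ⟨q, hq, rfl⟩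
        exact fixp q hq
      have := stab ρ h0 hρ hE hinf (hs (r, p)) (fixp p (le_trans (le_max_left _ _) p3))
      rw [this] at a2
      omega
    · intro hz
      have hfix : ρ g (s (r, p)) = s (r, p) := Prod.ext (a2.1.trans p1.symm) (by omega)
      have hc := ctr_equiv ρ (hs (r, p)) g
      rw [hfix] at hc
      have e := ctr_unique ρ h0 hc (hs (r, p))
      rw [e] at a1
      simp only at a1
      omega
  refine ⟨κ, ?_, main⟩
  apply Finite.surjective_of_injective
  intro r r' h
  by_contra hr
  obtain ⟨g, m, hm, h1, h2⟩ := separate hn h0 r r' hr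
  obtain ⟨M, hM⟩ := hE g
  exact h2 ((main r' g m M hm hM).2 (h ▸ (main r g m M hm hM).1 h1))

theorem orbit_inj {α : Type*} (a : Equiv.Perm α) (x : α) (h : InfiniteOrbit a x) :
    Function.Injective (fun k : ℤ => (a ^ k) x) := by
  by_contra hni
  simp only [Function.Injective, not_forall] at hni
  obtain ⟨k, l, hkl, hne⟩ := hni
  apply h
  -- periodic
  obtain ⟨d, hd, hdx⟩ : ∃ d : ℤ, d ≠ 0 ∧ (a ^ d) x = x := by
    refine ⟨k - l, sub_ne_zero.2 hne, ?_⟩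
    have : (a ^ (-l)) ((a ^ k) x) = (a ^ (-l)) ((a ^ l) x) := congrArg _ hkl
    rw [← Equiv.Perm.mul_apply, ← Equiv.Perm.mul_apply, ← zpow_add, ← zpow_add] at this
    simpa [sub_eq_neg_add] using this
  have hper : ∀ c : ℤ, (a ^ (d * c)) x = x := by
    intro c
    rw [zpow_mul]
    exact Function.IsFixedPt.perm_zpow (e := a ^ d) hdx c
  refine ((Set.finite_Ico 0 |d|).image (fun k : ℤ => (a ^ k) x)).subset ?_
  rintro _ ⟨m, rfl⟩
  refine ⟨m % d, ⟨Int.emod_nonneg _ hd, Int.emod_lt_abs _ hd⟩, ?_⟩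
  show (a ^ (m % d)) x = (a ^ m) x
  conv_rhs => rw [← Int.emod_add_mul_ediv m d, zpow_add, Equiv.Perm.mul_apply, hper]

/-- No infinite orbits consisting of points fixed by the finitary group. -/
theorem fix_case {n : ℕ} (hn : 3 ≤ n) (h0 : 0 < n) (ρ : Houghton n →* Equiv.Perm (XH n))
    (hρ : FinT ρ) (hE : ∀ g, IsEventualTranslation (ρ g)) (hinj : Function.Injective ρ)
    (h : Houghton n) (x : XH n) (hx : InfiniteOrbit (ρ h) x) (hfix : IsFix ρ x) : False := by
  have oi := orbit_inj _ _ hx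
  obtain ⟨κ, hκ, hmain⟩ := ray_corr hn h0 ρ hρ hE hinj
  obtain ⟨M0, hM0⟩ := hE h
  obtain ⟨k, k1, k2⟩ := forward_end hM0 x (by
    intro a b hab
    have := @oi (a : ℤ) (b : ℤ) (by simpa using hab)
    exact_mod_cast this)
  obtain ⟨k', k1', k2'⟩ := forward_end (tv_inv hM0) x (by
    intro a b hab
    have := @oi (-(a : ℤ)) (-(b : ℤ)) (by simpa using hab)
    simpa using this)
  have hkk : k ≠ k' := by
    rintro rfl
    simp only [Pi.neg_apply] at k1'
    omega
  obtain ⟨r, rfl⟩ := hκ k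
  obtain ⟨r', rfl⟩ := hκ k'
  obtain ⟨g, m, hm, m1, m2⟩ := separate hn h0 r r' (fun e => hkk (by rw [e]))
  obtain ⟨M, hM⟩ := hE g
  have z1 := (hmain r g m M hm hM).1 m1
  have z2 : M (κ r') ≠ 0 := fun hz => m2 ((hmain r' g m M hm hM).2 hz)
  obtain ⟨N, hN⟩ := tv_far hM
  obtain ⟨a, a1, a2⟩ := k2 N
  obtain ⟨b, b1, b2⟩ := k2' N
  have ea : ρ (h ^ a) x = (ρ h ^ a) x := by rw [map_pow]
  have fa : ρ g (ρ (h ^ a) x) = ρ (h ^ a) x := by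
    rw [ea]
    obtain ⟨e1, e2⟩ := hN _ a2
    rw [a1, z1] at e2
    exact Prod.ext e1 (by omega)
  have fb := fix_commute ρ (fix_equiv ρ hfix (h ^ a)) g (h⁻¹ ^ b * (h ^ a)⁻¹) fa
  have eb : ρ (h⁻¹ ^ b * (h ^ a)⁻¹) (ρ (h ^ a) x) = ((ρ h)⁻¹ ^ b) x := by
    rw [← Equiv.Perm.mul_apply, ← map_mul, inv_mul_cancel_right, map_pow, map_inv]
  rw [eb] at fb
  obtain ⟨-, e2⟩ := hN _ b2
  rw [fb, b1] at e2
  omega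

/-- transport: moving along `g_i` inside the first ray equals moving along `g_j` -/
theorem transport {n : ℕ} (h0 : 0 < n) (ρ : Houghton n →* Equiv.Perm (XH n))
    (hρ : FinT ρ) (hE : ∀ g, IsEventualTranslation (ρ g))
    (i j : Fin n) (hi : i ≠ ray0 n h0) (hj : j ≠ ray0 n h0) (k p p' : ℕ) (z : XH n)
    (h1 : IsCtr ρ z (ray0 n h0, p))
    (h2 : IsCtr ρ ((ρ (hGen n h0 i hi) ^ k) z) (ray0 n h0, p')) :
    (ρ (hGen n h0 i hi) ^ k) z = (ρ (hGen n h0 j hj) ^ k) z := by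
  have h3 := ctr_equiv ρ h1 (hGen n h0 i hi ^ k)
  rw [map_pow] at h3
  have h4 := ctr_unique ρ h0 h3 h2
  change ((hGen n h0 i hi).1 ^ k) _ = _ at h4
  have h5 := hGen_pow_le h0 i hi k p p' h4
  subst h5
  have hfix : ∀ q, ((hGen n h0 j hj ^ k)⁻¹ * hGen n h0 i hi ^ k).1 (ray0 n h0, q + k) =
      (ray0 n h0, q + k) := by
    intro q
    show ((hGen n h0 j hj).1 ^ k)⁻¹ (((hGen n h0 i hi).1 ^ k) (ray0 n h0, q + k)) = _
    rw [hGen_pow_ray0, Equiv.Perm.inv_eq_iff_eq, hGen_pow_ray0]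
  have hinf : {y | ((hGen n h0 j hj ^ k)⁻¹ * hGen n h0 i hi ^ k).1 y = y}.Infinite := by
    refine (Set.infinite_range_of_injective
      (f := fun q : ℕ => ((ray0 n h0, q + k) : XH n)) ?_).mono ?_
    · intro a b hab
      have := congrArg Prod.snd hab
      simp only at this
      omega
    · rintro _ ⟨q, rfl⟩
      exact hfix q
  have h6 := stab ρ h0 hρ hE hinf h1 (hfix p')
  rw [map_mul, map_inv, map_pow, map_pow, Equiv.Perm.mul_apply, Equiv.Perm.inv_eq_iff_eq] at h6
  exact h6

theorem gen_fix_inf {n : ℕ} (h0 : 0 < n) (i j : Fin n) (hi : i ≠ ray0 n h0)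
    (hj : j ≠ ray0 n h0) (hij : i ≠ j) : {y | (hGen n h0 i hi).1 y = y}.Infinite := by
  refine (Set.infinite_range_of_injective
      (f := fun q : ℕ => ((j, q) : XH n)) ?_).mono ?_
  · intro a b hab
    exact congrArg Prod.snd hab
  · rintro _ ⟨q, rfl⟩
    exact hGen_other h0 i hi _ hj hij.symm

theorem main_aux {n : ℕ} (hn : 3 ≤ n) (h0 : 0 < n) (ρ : Houghton n →* Equiv.Perm (XH n))
    (hE : ∀ g, IsEventualTranslation (ρ g)) (hinj : Function.Injective ρ)
    (i j : Fin n) (hi : i ≠ ray0 n h0) (hj : j ≠ ray0 n h0) (hij : i ≠ j)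
    (x : XH n) (hx : InfiniteOrbit (ρ (hGen n h0 i hi)) x) :
    ∃ x' : XH n, ∀ z ∈ permOrbit (ρ (hGen n h0 i hi)) x,
      ρ (hGen n h0 j hj) z ≠ z → z ∈ permOrbit (ρ (hGen n h0 j hj)) x' := by
  have hρ : FinT ρ := by
    refine finT_of_one ρ (a := (ray0 n h0, 0)) (b := (ray0 n h0, 1)) (by simp) ?_
    rw [← gen_comm h0 i j hi hj hij]
    have := commutator_finite (hE (hGen n h0 i hi)) (hE (hGen n h0 j hj))
    simpa only [map_mul, map_inv] using this
  have oi := orbit_inj _ _ hx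
  rcases trichotomy ρ h0 hρ x with h | h | ⟨a, ha⟩
  · exact (fix_case hn h0 ρ hρ hE hinj _ x hx h).elim
  · exfalso
    apply hx
    refine (hρ (ray0 n h0, 0) (ray0 n h0, 1)).subset ?_
    rintro _ ⟨k, rfl⟩
    have := sign_equiv ρ h (hGen n h0 i hi ^ k) (ray0 n h0, 0) (ray0 n h0, 1) (by simp)
    rw [map_zpow] at this
    exact this
  -- centers of moved points lie on the first ray
  have ctr : ∀ k : ℤ, ρ (hGen n h0 j hj) ((ρ (hGen n h0 i hi) ^ k) x) ≠
      (ρ (hGen n h0 i hi) ^ k) x →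
      ∃ p, IsCtr ρ ((ρ (hGen n h0 i hi) ^ k) x) (ray0 n h0, p) := by
    intro k hk
    have hc := ctr_equiv ρ ha (hGen n h0 i hi ^ k)
    rw [map_zpow] at hc
    generalize ((hGen n h0 i hi ^ k).1 a) = c at hc
    have m1 : (hGen n h0 j hj).1 c ≠ c := fun e =>
      hk (stab ρ h0 hρ hE (gen_fix_inf h0 j i hj hi hij.symm) hc e)
    have m2 : (hGen n h0 i hi).1 c ≠ c := by
      intro e
      have := stab ρ h0 hρ hE (gen_fix_inf h0 i j hi hj hij) hc e
      have h2 : (ρ (hGen n h0 i hi) ^ (1 + k)) x = (ρ (hGen n h0 i hi) ^ k) x := by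
        rw [zpow_one_add]; exact this
      have := @oi _ _ h2
      omega
    have hc0 : c.1 = ray0 n h0 := by
      by_contra hne
      by_cases hci : c.1 = i
      · exact m1 (hGen_other h0 j hj c hne (by rw [hci]; exact hij))
      · exact m2 (hGen_other h0 i hi c hne hci)
    exact ⟨c.2, by rw [← hc0]; exact hc⟩
  by_cases hex : ∃ z0 ∈ permOrbit (ρ (hGen n h0 i hi)) x, ρ (hGen n h0 j hj) z0 ≠ z0
  · obtain ⟨_, ⟨k, rfl⟩, hk⟩ := hex
    refine ⟨(ρ (hGen n h0 i hi) ^ k) x, ?_⟩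
    · rintro _ ⟨l, rfl⟩ hl
      obtain ⟨p, hp⟩ := ctr k hk
      obtain ⟨q, hq⟩ := ctr l hl
      have hkl : ∀ u v : ℤ, u ≤ v → (ρ (hGen n h0 i hi) ^ v) x =
          (ρ (hGen n h0 i hi) ^ (v - u).toNat) ((ρ (hGen n h0 i hi) ^ u) x) := by
        intro u v huv
        rw [← zpow_natCast, ← Equiv.Perm.mul_apply, ← zpow_add]
        congr 2
        omega
      show _ ∈ permOrbit _ ((ρ (hGen n h0 i hi) ^ k) x)
      rcases le_total k l with hle | hle
      · have e := hkl k l hle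
        rw [e] at hq
        have t := transport h0 ρ hρ hE i j hi hj _ p q _ hp hq
        refine ⟨((l - k).toNat : ℤ), ?_⟩
        simp only [zpow_natCast]
        rw [e, t]
      · have e := hkl l k hle
        rw [e] at hp
        have t := transport h0 ρ hρ hE i j hi hj _ q p _ hq hp
        refine ⟨-((k - l).toNat : ℤ), ?_⟩
        simp only [zpow_neg, zpow_natCast]
        rw [e, t, Equiv.Perm.inv_eq_iff_eq]
  · push Not at hex
    exact ⟨x, fun z hz hm => (hm (hex z hz)).elim⟩

/-- For `n ≥ 3`, an injective endomorphism `φ` of `H_n`, and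
distinct `i, j ∈ {2,…,n}`: if `O` is an infinite orbit of `φ(g_i)`, then all
points of `O` moved by `φ(g_j)` lie in a single orbit of `φ(g_j)`. -/
theorem monomorphism_orbit_meets_single_orbit
    (n : ℕ) (hn : 3 ≤ n) (h0 : 0 < n)
    (φ : Houghton n →* Houghton n) (hφ : Function.Injective φ)
    (i j : Fin n) (hi : i ≠ ray0 n h0) (hj : j ≠ ray0 n h0) (hij : i ≠ j)
    (x : XH n) (hx : InfiniteOrbit (imageGen h0 φ i hi) x) :
    ∃ x' : XH n, ∀ z ∈ permOrbit (imageGen h0 φ i hi) x,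
      imageGen h0 φ j hj z ≠ z → z ∈ permOrbit (imageGen h0 φ j hj) x' := by
  exact main_aux hn h0 ((Houghton n).subtype.comp φ) (fun g => (φ g).2)
    ((Houghton n).subtype_injective.comp hφ) i j hi hj hij x hx
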